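/- Let Δ be the bicyclic graph built as follows: take two vertices u and v joined by three internally disjoint paths Q₁: v–a₁–⋯–a_k–r₁–b_k–⋯–b₁–u, Q₂: u–d₁–⋯–d_k–r₂–c_k–⋯–c₁–v, and Q₃ of length ℓ ≥ 1 with no trees attached at its internal vertices; attach rooted trees T_j¹ at a_j, T_j² at b_j, T_j³ at c_j, T_j⁴ at d_j for 1 ≤ j ≤ k, rooted trees Θ₁, Θ₂ at r₁, r₂, and rooted trees Υ₁, Υ₂ at u, v. Assume that for each j the trees T_j¹, T_j², T_j³, T_j⁴ are pairwise isomorphic as rooted trees, that Θ₁ ≅ Θ₂ and Υ₁ ≅ Υ₂ as rooted trees, and that ℓ ≠ 2k+2 or at least one of T₁¹, Θ₁ has more than one vertex. Set A_j = Aut(T_j¹)_{root}, H = Aut(Θ₁)_{root}, K = Aut(Υ₁)_{root}. Then Aut(Δ) ≅ ((A₁)⁴ × ⋯ × (A_k)⁴ × H² × K²) ⋊ (Z₂ × Z₂), where the generator induced by exchanging Q₁ and Q₂ while fixing u and v swaps, for each j, the T_j¹-coordinate with the T_j³-coordinate and the T_j²-coordinate with the T_j⁴-coordinate, swaps the two H-coordinates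 and fixes the K-coordinates; and the generator induced by the reflection exchanging u and v while preserving each path setwise swaps, for each j, the T_j¹-coordinate with the T_j²-coordinate and the T_j³-coordinate with the T_j⁴-coordinate, fixes the H-coordinates and swaps the two K-coordinates. -/

import Mathlib

open SimpleGraph

/-- The stabilizer `Aut(G)_v = {f ∈ Aut(G) : f(v) = v}` of a vertex `v` in the automorphism
group of a graph `G`. -/
def autStab {V : Type} (G : SimpleGraph V) (v : V) : Subgroup (G ≃g G) where
  carrier := {f | f v = v}
  one_mem' := rfl
  mul_mem' := by
    intro f g hf hg
    simp only [Set.mem_setOf_eq] at *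
    show f (g v) = v
    rw [hg, hf]
  inv_mem' := by
    intro f hf
    simp only [Set.mem_setOf_eq] at *
    calc f⁻¹ v = f⁻¹ (f v) := by rw [hf]
    _ = v := RelIso.inv_apply_self f v

/-- The automorphism of `ι → G` given by permuting coordinates by `σ`. -/
def permAut {ι G : Type} [Group G] (σ : Equiv.Perm ι) : MulAut (ι → G) where
  toFun f := f ∘ σ.symm
  invFun f := f ∘ σ
  left_inv f := by funext i; simp
  right_inv f := by funext i; simp
  map_mul' f g := rfl

/-- The action of `Equiv.Perm ι` on `ι → G` by permuting coordinates, as a homomorphism. -/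
def permHom (ι G : Type) [Group G] : Equiv.Perm ι →* MulAut (ι → G) where
  toFun := permAut
  map_one' := by ext f i; rfl
  map_mul' σ τ := by ext f i; rfl

/-- Combine two actions-by-automorphisms into one on the direct product. -/
def autProdHom {Q M N : Type} [Group Q] [Group M] [Group N]
    (φ : Q →* MulAut M) (ψ : Q →* MulAut N) : Q →* MulAut (M × N) where
  toFun q := (φ q).prodCongr (ψ q)
  map_one' := by
    show MulEquiv.prodCongr (φ 1) (ψ 1) = 1
    rw [map_one, map_one]; ext x <;> rfl
  map_mul' a b := by
    show MulEquiv.prodCongr (φ (a * b)) (ψ (a * b)) = _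
    rw [map_mul, map_mul]; ext x <;> rfl

/-- Combine a family of actions-by-automorphisms into one on the direct product `∀ i, M i`. -/
def autPiHom {Q : Type} [Group Q] {ι : Type} {M : ι → Type} [∀ i, Group (M i)]
    (φ : ∀ i, Q →* MulAut (M i)) : Q →* MulAut (∀ i, M i) where
  toFun q :=
    { toFun := fun f i => φ i q (f i)
      invFun := fun f i => (φ i q).symm (f i)
      left_inv := fun f => by funext i; simp
      right_inv := fun f => by funext i; simp
      map_mul' := fun f g => by funext i; simp }
  map_one' := by
    ext f i
    show φ i 1 (f i) = f i
    rw [map_one]; rfl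
  map_mul' a b := by
    ext f i
    show φ i (a * b) (f i) = _
    rw [map_mul]; rfl

/-- The translation action of an additive group on itself, as permutations. -/
def transPermHom (A : Type) [AddGroup A] : Multiplicative A →* Equiv.Perm A :=
  MulAction.toPermHom (Multiplicative A) A

/-- The action of (the multiplicative version of) an additive group `A` on `A → G`
by translating the coordinates. -/
def transAutHom (A G : Type) [AddGroup A] [Group G] : Multiplicative A →* MulAut (A → G) :=
  (permHom A G).comp (transPermHom A)

/-- The Klein four-group `Z₂ × Z₂` (written multiplicatively). -/
abbrev K4 : Type := Multiplicative (ZMod 2 × ZMod 2)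

/-- Projection of the Klein four-group onto its first `Z₂` factor. -/
def fstK : K4 →* Multiplicative (ZMod 2) :=
  AddMonoidHom.toMultiplicative (AddMonoidHom.fst (ZMod 2) (ZMod 2))

/-- Projection of the Klein four-group onto its second `Z₂` factor. -/
def sndK : K4 →* Multiplicative (ZMod 2) :=
  AddMonoidHom.toMultiplicative (AddMonoidHom.snd (ZMod 2) (ZMod 2))

/-- The graph obtained from `base` by attaching, for each `i : ι`, the rooted tree
`(T i, t i)` at the vertex `x i` (identifying the root `t i` with `x i`); the attached trees
are pairwise disjoint and disjoint from `base` except at the attachment vertices. -/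
def attachTrees {B : Type} (base : SimpleGraph B) {ι : Type} {W : ι → Type}
    (T : ∀ i, SimpleGraph (W i)) (t : ∀ i, W i) (x : ι → B) :
    SimpleGraph (B ⊕ Σ i, {w : W i // w ≠ t i}) where
  Adj a b :=
    match a, b with
    | .inl a, .inl b => base.Adj a b
    | .inl a, .inr ⟨i, w⟩ => a = x i ∧ (T i).Adj (t i) w.1
    | .inr ⟨i, w⟩, .inl b => b = x i ∧ (T i).Adj (t i) w.1
    | .inr ⟨i, w⟩, .inr ⟨j, w'⟩ => ∃ h : i = j, (T j).Adj (h ▸ w).1 w'.1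
  symm := by
    constructor
    rintro (a | ⟨i, w⟩) (b | ⟨j, w'⟩) h
    · exact SimpleGraph.Adj.symm h
    · exact h
    · exact h
    · obtain ⟨rfl, hw⟩ := h
      exact ⟨rfl, SimpleGraph.Adj.symm hw⟩
  loopless := by
    constructor
    rintro (a | ⟨i, w⟩) h
    · exact base.loopless.irrefl a h
    · obtain ⟨h', hw⟩ := h
      exact (T i).loopless.irrefl _ hw

/-- Vertices of a theta graph: two hub vertices `u`, `v` joined by three internally disjoint
paths having `p`, `q` and `r` internal vertices respectively. -/
inductive ThetaV (p q r : ℕ) : Type where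
  | u : ThetaV p q r
  | v : ThetaV p q r
  | x1 : Fin p → ThetaV p q r
  | x2 : Fin q → ThetaV p q r
  | x3 : Fin r → ThetaV p q r
  deriving DecidableEq

/-- The theta graph: the vertices `u` and `v` joined by three internally disjoint paths of
lengths `p + 1`, `q + 1` and `r + 1`; the internal vertices of each path are indexed starting
from the end adjacent to `v`. -/
def theta (p q r : ℕ) : SimpleGraph (ThetaV p q r) where
  Adj a b :=
    match a, b with
    | .u, .v => p = 0 ∨ q = 0 ∨ r = 0
    | .v, .u => p = 0 ∨ q = 0 ∨ r = 0
    | .v, .x1 i => i.val = 0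
    | .x1 i, .v => i.val = 0
    | .u, .x1 i => i.val = p - 1
    | .x1 i, .u => i.val = p - 1
    | .v, .x2 i => i.val = 0
    | .x2 i, .v => i.val = 0
    | .u, .x2 i => i.val = q - 1
    | .x2 i, .u => i.val = q - 1
    | .v, .x3 i => i.val = 0
    | .x3 i, .v => i.val = 0
    | .u, .x3 i => i.val = r - 1
    | .x3 i, .u => i.val = r - 1
    | .x1 i, .x1 j => i.val + 1 = j.val ∨ j.val + 1 = i.val
    | .x2 i, .x2 j => i.val + 1 = j.val ∨ j.val + 1 = i.val
    | .x3 i, .x3 j => i.val + 1 = j.val ∨ j.val + 1 = i.val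
    | _, _ => False
  symm := by
    constructor
    intro a b h
    cases a <;> cases b <;> simp only [] at h ⊢ <;> tauto
  loopless := by
    constructor
    intro a h
    cases a <;> simp only [] at h <;> omega

/-- Index type for the trees attached in the construction of Corollary 2.3:
for each `j < k` four trees `T_j¹, T_j², T_j³, T_j⁴`, two trees `Θ₁, Θ₂`
and two trees `Υ₁, Υ₂`. -/
abbrev Stmt3Index (k : ℕ) : Type := (Fin 4 × Fin k) ⊕ Fin 2 ⊕ Fin 2

/-- The family of vertex types of the attached trees. -/
def stmt3W {k : ℕ} (WT : Fin 4 → Fin k → Type) (WΘ WΥ : Fin 2 → Type) :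
    Stmt3Index k → Type :=
  fun i =>
    match i with
    | .inl p => WT p.1 p.2
    | .inr (.inl j) => WΘ j
    | .inr (.inr j) => WΥ j

/-- The family of attached trees. -/
def stmt3T {k : ℕ} {WT : Fin 4 → Fin k → Type} {WΘ WΥ : Fin 2 → Type}
    (TT : ∀ a j, SimpleGraph (WT a j)) (TΘ : ∀ j, SimpleGraph (WΘ j))
    (TΥ : ∀ j, SimpleGraph (WΥ j)) :
    ∀ i, SimpleGraph (stmt3W WT WΘ WΥ i) :=
  fun i =>
    match i with
    | .inl p => TT p.1 p.2
    | .inr (.inl j) => TΘ j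
    | .inr (.inr j) => TΥ j

/-- The family of roots of the attached trees. -/
def stmt3root {k : ℕ} {WT : Fin 4 → Fin k → Type} {WΘ WΥ : Fin 2 → Type}
    (tT : ∀ a j, WT a j) (tΘ : ∀ j, WΘ j) (tΥ : ∀ j, WΥ j) :
    ∀ i, stmt3W WT WΘ WΥ i :=
  fun i =>
    match i with
    | .inl p => tT p.1 p.2
    | .inr (.inl j) => tΘ j
    | .inr (.inr j) => tΥ j

/-- Attachment vertices on the theta graph with hub vertices `u`, `v` and paths
`Q₁ : v–a₁–⋯–a_k–r₁–b_k–⋯–b₁–u`, `Q₂ : v–c₁–⋯–c_k–r₂–d_k–⋯–d₁–u` (each of length `2k + 2`)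
and `Q₃` of length `m + 1`: the tree `T_j¹` is attached at `a_j`, `T_j²` at `b_j`,
`T_j³` at `c_j`, `T_j⁴` at `d_j`, the trees `Θ₁, Θ₂` at `r₁, r₂` and `Υ₁, Υ₂` at `u, v`. -/
def stmt3x (k m : ℕ) : Stmt3Index k → ThetaV (2 * k + 1) (2 * k + 1) m :=
  fun i =>
    match i with
    | .inl p =>
        ![ThetaV.x1 ⟨p.2.1, by omega⟩, ThetaV.x1 ⟨2 * k - p.2.1, by have := p.2.2; omega⟩,
          ThetaV.x2 ⟨p.2.1, by omega⟩, ThetaV.x2 ⟨2 * k - p.2.1, by have := p.2.2; omega⟩] p.1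
    | .inr (.inl j) => ![ThetaV.x1 ⟨k, by omega⟩, ThetaV.x2 ⟨k, by omega⟩] j
    | .inr (.inr j) => ![ThetaV.u, ThetaV.v] j

/-- The bicyclic graph of Corollary 2.3. -/
def stmt3Graph (k m : ℕ) {WT : Fin 4 → Fin k → Type} {WΘ WΥ : Fin 2 → Type}
    (TT : ∀ a j, SimpleGraph (WT a j)) (TΘ : ∀ j, SimpleGraph (WΘ j))
    (TΥ : ∀ j, SimpleGraph (WΥ j))
    (tT : ∀ a j, WT a j) (tΘ : ∀ j, WΘ j) (tΥ : ∀ j, WΥ j) :=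
  attachTrees (theta (2 * k + 1) (2 * k + 1) m) (stmt3T TT TΘ TΥ) (stmt3root tT tΘ tΥ)
    (stmt3x k m)

/-- The action of `Z₂ × Z₂` on `(A₁)⁴ × ⋯ × (A_k)⁴ × H² × K²`: for each `j` the four
`A_j`-coordinates are indexed by the elements `(0,0), (0,1), (1,0), (1,1)` of `Z₂ × Z₂`
(corresponding to `T_j¹, T_j², T_j³, T_j⁴`) and translated, so the generator `a = (1,0)`
swaps the `T_j¹`- with the `T_j³`-coordinate and the `T_j²`- with the `T_j⁴`-coordinate,
while `b = (0,1)` swaps the `T_j¹`- with the `T_j²`-coordinate and the `T_j³`- with the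
`T_j⁴`-coordinate; the `H`-coordinates are swapped by `a` and fixed by `b`, and the
`K`-coordinates are fixed by `a` and swapped by `b`. -/
def stmt3act {k : ℕ} (A : Fin k → Type) [∀ j, Group (A j)] (H K : Type) [Group H] [Group K] :
    K4 →* MulAut ((∀ j, ZMod 2 × ZMod 2 → A j) × (ZMod 2 → H) × (ZMod 2 → K)) :=
  autProdHom (autPiHom fun j => transAutHom (ZMod 2 × ZMod 2) (A j))
    (autProdHom ((transAutHom (ZMod 2) H).comp fstK) ((transAutHom (ZMod 2) K).comp sndK))

/-- The group `((A₁)⁴ × ⋯ × (A_k)⁴ × H² × K²) ⋊ (Z₂ × Z₂)`. -/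
def stmt3group {k : ℕ} (A : Fin k → Type) [∀ j, Group (A j)] (H K : Type) [Group H] [Group K] :
    Type :=
  ((∀ j, ZMod 2 × ZMod 2 → A j) × (ZMod 2 → H) × (ZMod 2 → K)) ⋊[stmt3act A H K] K4

instance {k : ℕ} (A : Fin k → Type) [∀ j, Group (A j)] (H K : Type) [Group H] [Group K] :
    Group (stmt3group A H K) :=
  inferInstanceAs (Group (_ ⋊[stmt3act A H K] K4))

/-!
The base theta graph is the 2-core of the graph with trees attached: in a finite set of vertices of
a rooted tree, a vertex furthest from the root has at most one neighbour. Hence every automorphism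
restricts to the theta graph and carries each attached tree to the tree attached at the image
vertex. So if a group `Q` acts faithfully on the base, permutes the attachment vertices within
each isomorphism class of trees, and contains every automorphism of the base that keeps the
attachment vertices of nontrivial trees among the attachment vertices, then the automorphism group
is the product of the root stabilizers extended by `Q`.

An automorphism of the theta graph preserves the set of the two vertices of degree three, and once
it fixes both of them it is determined by the permutation it induces on the three paths. If the
third path has the same length as the other two, a nontrivial tree on the first two paths keeps the
third one in place, so only the Klein four-group generated by the exchange of the first two
paths and the exchange of the two ends remains.
-/

section SimpleGraphLemmas

variable {V V' : Type*} {G : SimpleGraph V} {G' : SimpleGraph V'}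

theorem apply_eq_of_reachable {α : Type*} {F : V → α} (hF : ∀ ⦃a b⦄, G.Adj a b → F a = F b)
    {a b : V} (hab : G.Reachable a b) : F a = F b := by
  obtain ⟨p⟩ := hab
  induction p with
  | nil => rfl
  | cons hadj _ ih => exact (hF hadj).trans ih

theorem exists_iso_of_image_range_eq {A A' : Type*} {H : SimpleGraph A} {H' : SimpleGraph A'}
    (φ : H ↪g G) (ψ : H' ↪g G') (f : G ≃g G') (hf : f '' Set.range φ = Set.range ψ) :
    ∃ e : H ≃g H', ∀ a, f (φ a) = ψ (e a) := by
  have hmem (a : A) : ∃ a', ψ a' = f (φ a) := by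
    rw [← Set.mem_range, ← hf]
    exact Set.mem_image_of_mem f (Set.mem_range_self a)
  choose e he using hmem
  have hbij : Function.Bijective e := by
    refine ⟨fun a b hab => φ.injective (f.injective ?_), fun a' => ?_⟩
    · rw [← he, ← he, hab]
    · obtain ⟨_, ⟨a, rfl⟩, ha⟩ := hf.ge (Set.mem_range_self a')
      exact ⟨a, ψ.injective ((he a).trans ha)⟩
  refine ⟨⟨Equiv.ofBijective e hbij, fun {a b} => ?_⟩, fun a => (he a).symm⟩
  rw [Equiv.ofBijective_apply, Equiv.ofBijective_apply, ← ψ.map_adj_iff, he, he, f.map_adj_iff,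
    φ.map_adj_iff]

/-- Conjugation by a graph isomorphism, as an isomorphism of automorphism groups. -/
def autConj (E : G ≃g G') : (G ≃g G) ≃* (G' ≃g G') where
  toFun f := (E.symm.trans f).trans E
  invFun f := (E.trans f).trans E.symm
  left_inv f := RelIso.ext fun a => by simp [RelIso.trans_apply]
  right_inv f := RelIso.ext fun a => by simp [RelIso.trans_apply]
  map_mul' f g := RelIso.ext fun a => by simp [RelIso.trans_apply, RelIso.mul_apply]

/-- The 2-core of a graph: the union of its finite subgraphs of minimum degree at least two. In
a finite graph this is what remains after repeatedly deleting vertices of degree at most one. -/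
def twoCore (G : SimpleGraph V) : Set V :=
  {a | ∃ S : Set V, S.Finite ∧ a ∈ S ∧ ∀ b ∈ S, (G.neighborSet b ∩ S).Nontrivial}

theorem map_mem_twoCore (f : G →g G') (hf : Function.Injective f) {a : V} (ha : a ∈ twoCore G) :
    f a ∈ twoCore G' := by
  obtain ⟨S, hS, haS, hdeg⟩ := ha
  refine ⟨f '' S, hS.image f, Set.mem_image_of_mem f haS, Set.forall_mem_image.2 fun b hb => ?_⟩
  exact ((hdeg b hb).image hf).mono <| (Set.image_inter_subset _ _ _).trans <|
    Set.inter_subset_inter_left _ (f.image_neighborSet_subset b)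

theorem image_twoCore (f : G ≃g G') : f '' twoCore G = twoCore G' := by
  refine Set.Subset.antisymm (Set.image_subset_iff.2 fun a ha => ?_) fun b hb => ?_
  · exact map_mem_twoCore f.toHom f.injective ha
  · exact ⟨f.symm b, map_mem_twoCore f.symm.toHom f.symm.injective hb, f.apply_symm_apply b⟩

theorem twoCore_eq_univ [Finite V] (hG : ∀ a, (G.neighborSet a).Nontrivial) :
    twoCore G = Set.univ :=
  Set.eq_univ_of_forall fun a =>
    ⟨Set.univ, Set.finite_univ, Set.mem_univ a, fun b _ => by rw [Set.inter_univ]; exact hG b⟩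

theorem eq_of_adj_of_dist_eq_add_one (hG : G.IsTree) {r a b c : V} (hb : G.Adj b a)
    (hc : G.Adj c a) (hbd : G.dist r a = G.dist r b + 1) (hcd : G.dist r a = G.dist r c + 1) :
    b = c := by
  obtain ⟨p, hpl⟩ := hG.connected.exists_walk_length_eq_dist r b
  obtain ⟨q, hql⟩ := hG.connected.exists_walk_length_eq_dist r c
  have hp' : (p.concat hb).IsPath :=
    Walk.isPath_of_length_eq_dist _ (by rw [Walk.length_concat, hpl, hbd])
  have hq' : (q.concat hc).IsPath :=
    Walk.isPath_of_length_eq_dist _ (by rw [Walk.length_concat, hql, hcd])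
  have hpq : p.concat hb = q.concat hc := (hG.existsUnique_path r a).unique hp' hq'
  simpa only [Walk.penultimate_concat] using congrArg Walk.penultimate hpq

theorem subset_singleton_of_isTree (hG : G.IsTree) (r : V) {S : Set V} (hS : S.Finite)
    (hdeg : ∀ a ∈ S, a ≠ r → (G.neighborSet a ∩ S).Nontrivial) : S ⊆ {r} := by
  intro s hs
  -- A vertex of `S` furthest from `r` has only its parent as a neighbour in `S`.
  obtain ⟨a, ha, hmax⟩ := Set.exists_max_image S (G.dist r) hS ⟨s, hs⟩
  have hparent {b : V} (hb : b ∈ G.neighborSet a ∩ S) : G.dist r a = G.dist r b + 1 := by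
    have := hmax b hb.2
    have := hG.dist_eq_dist_add_one_of_adj r hb.1
    omega
  have har : a = r := by
    by_contra har
    obtain ⟨b, hb, c, hc, hbc⟩ := hdeg a ha har
    exact hbc (eq_of_adj_of_dist_eq_add_one hG hb.1.symm hc.1.symm (hparent hb) (hparent hc))
  have hsr : G.dist r s = 0 := by
    have := hmax s hs
    rwa [har, dist_self, Nat.le_zero] at this
  exact ((hG.connected.preconnected r s).dist_eq_zero_iff.1 hsr).symm

end SimpleGraphLemmas

namespace attachTrees

variable {B B' ι ι' : Type} {base : SimpleGraph B} {base' : SimpleGraph B'}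
  {W : ι → Type} {W' : ι' → Type} {T : ∀ i, SimpleGraph (W i)} {T' : ∀ i, SimpleGraph (W' i)}
  {t : ∀ i, W i} {t' : ∀ i, W' i} {x : ι → B} {x' : ι' → B'}

open Classical in
/-- The vertex of `attachTrees base T t x` that comes from the vertex `w` of the `i`-th tree; the
root of the tree has become the attachment vertex `x i`. -/
noncomputable def treeVertex (t : ∀ i, W i) (x : ι → B) (i : ι) (w : W i) :
    B ⊕ Σ i, {w : W i // w ≠ t i} :=
  if h : w = t i then .inl (x i) else .inr ⟨i, w, h⟩

theorem treeVertex_root (i : ι) : treeVertex t x i (t i) = .inl (x i) :=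
  dif_pos rfl

theorem treeVertex_of_ne {i : ι} {w : W i} (hw : w ≠ t i) :
    treeVertex t x i w = .inr ⟨i, w, hw⟩ :=
  dif_neg hw

theorem treeVertex_injective (i : ι) : Function.Injective (treeVertex t x i) := by
  intro w w' h
  by_cases hw : w = t i <;> by_cases hw' : w' = t i
  · rw [hw, hw']
  · rw [hw, treeVertex_root, treeVertex_of_ne hw'] at h
    exact absurd h Sum.inl_ne_inr
  · rw [hw', treeVertex_root, treeVertex_of_ne hw] at h
    exact absurd h Sum.inr_ne_inl
  · rw [treeVertex_of_ne hw, treeVertex_of_ne hw'] at h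
    simpa using h

theorem adj_inr_inr_iff {i : ι} {w w' : {w : W i // w ≠ t i}} :
    (attachTrees base T t x).Adj (.inr ⟨i, w⟩) (.inr ⟨i, w'⟩) ↔ (T i).Adj w w' :=
  exists_prop_of_true rfl

theorem adj_treeVertex_iff {i : ι} {w w' : W i} :
    (attachTrees base T t x).Adj (treeVertex t x i w) (treeVertex t x i w') ↔ (T i).Adj w w' := by
  by_cases hw : w = t i <;> by_cases hw' : w' = t i
  · subst hw hw'
    simp only [SimpleGraph.irrefl]
  · subst hw
    rw [treeVertex_root, treeVertex_of_ne hw']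
    exact and_iff_right rfl
  · subst hw'
    rw [treeVertex_root, treeVertex_of_ne hw, (T i).adj_comm]
    exact and_iff_right rfl
  · rw [treeVertex_of_ne hw, treeVertex_of_ne hw']
    exact adj_inr_inr_iff

/-- The inclusion of the `i`-th attached tree. -/
noncomputable def treeEmbedding (base : SimpleGraph B) (T : ∀ i, SimpleGraph (W i))
    (t : ∀ i, W i) (x : ι → B) (i : ι) : T i ↪g attachTrees base T t x where
  toFun := treeVertex t x i
  inj' := treeVertex_injective i
  map_rel_iff' := adj_treeVertex_iff

/-- The inclusion of the graph to which the trees are attached. -/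
def baseEmbedding (base : SimpleGraph B) (T : ∀ i, SimpleGraph (W i)) (t : ∀ i, W i)
    (x : ι → B) : base ↪g attachTrees base T t x where
  toFun := Sum.inl
  inj' := Sum.inl_injective
  map_rel_iff' := Iff.rfl

theorem neighborSet_inr (i : ι) (w : {w : W i // w ≠ t i}) :
    (attachTrees base T t x).neighborSet (.inr ⟨i, w⟩) =
      treeVertex t x i '' (T i).neighborSet w := by
  ext (b | ⟨j, w', hw'⟩)
  · constructor
    · rintro ⟨rfl, h⟩
      exact ⟨t i, h.symm, treeVertex_root i⟩
    · rintro ⟨w', h, hb⟩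
      rwa [← hb, mem_neighborSet, ← treeVertex_of_ne w.2, adj_treeVertex_iff]
  · constructor
    · rintro ⟨rfl, h⟩
      exact ⟨w', h, treeVertex_of_ne hw'⟩
    · rintro ⟨w', h, hb⟩
      rwa [← hb, mem_neighborSet, ← treeVertex_of_ne w.2, adj_treeVertex_iff]

theorem iso_ext {V : Type*} {G : SimpleGraph V} {f g : attachTrees base T t x ≃g G}
    (hbase : ∀ b, f (.inl b) = g (.inl b))
    (htree : ∀ i w, f (treeVertex t x i w) = g (treeVertex t x i w)) : f = g := by
  ext (b | ⟨i, w, hw⟩)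
  · exact hbase b
  · rw [← treeVertex_of_ne hw]
    exact htree i w

theorem twoCore_eq (hT : ∀ i, (T i).IsTree) :
    twoCore (attachTrees base T t x) = Sum.inl '' twoCore base := by
  refine Set.Subset.antisymm ?_ (Set.image_subset_iff.2 fun b hb =>
    map_mem_twoCore (baseEmbedding base T t x).toHom Sum.inl_injective hb)
  rintro a ⟨S, hS, ha, hdeg⟩
  have hSbase {i : ι} {w : {w : W i // w ≠ t i}} : .inr ⟨i, w⟩ ∉ S := by
    intro hw
    refine w.2 (subset_singleton_of_isTree (hT i) (t i) (S := treeVertex t x i ⁻¹' S)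
      (hS.preimage (treeVertex_injective i).injOn) (fun w' hw' hne => ?_) ?_)
    · rw [Set.mem_preimage, treeVertex_of_ne hne] at hw'
      have := hdeg _ hw'
      rw [neighborSet_inr, ← Set.image_inter_preimage] at this
      exact Set.nontrivial_of_image _ _ this
    · rwa [Set.mem_preimage, treeVertex_of_ne w.2]
  obtain b | ⟨i, w⟩ := a
  · refine ⟨b, ⟨Sum.inl ⁻¹' S, hS.preimage Sum.inl_injective.injOn, ha, fun b' hb' => ?_⟩, rfl⟩
    refine Set.nontrivial_of_image Sum.inl _ ((hdeg _ hb').mono ?_)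
    rintro (c | ⟨i, w⟩) ⟨hadj, hc⟩
    · exact ⟨c, ⟨hadj, hc⟩, rfl⟩
    · exact absurd hc hSbase
  · exact absurd ha hSbase

/-- The retraction of `attachTrees base T t x` onto `base` that collapses each tree to its
attachment vertex. -/
def toBase (x : ι → B) : (B ⊕ Σ i, {w : W i // w ≠ t i}) → B :=
  Sum.elim id fun w => x w.1

theorem toBase_treeVertex (i : ι) (w : W i) : toBase x (treeVertex t x i w) = x i := by
  by_cases hw : w = t i
  · rw [hw, treeVertex_root]
    rfl
  · rw [treeVertex_of_ne hw]
    rfl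

theorem toBase_eq_of_adj_inr {a : B ⊕ Σ i, {w : W i // w ≠ t i}} {w : Σ i, {w : W i // w ≠ t i}}
    (h : (attachTrees base T t x).Adj (.inr w) a) : toBase x a = toBase x (.inr w) := by
  obtain ⟨i, w⟩ := w
  rw [← mem_neighborSet, neighborSet_inr] at h
  obtain ⟨w', -, rfl⟩ := h
  exact toBase_treeVertex i w'

theorem mem_range_treeVertex_iff (hx : Function.Injective x) {i : ι}
    {a : B ⊕ Σ i, {w : W i // w ≠ t i}} :
    a ∈ Set.range (treeVertex t x i) ↔ toBase x a = x i := by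
  refine ⟨?_, fun h => ?_⟩
  · rintro ⟨w, rfl⟩
    exact toBase_treeVertex i w
  · obtain b | ⟨j, w, hw⟩ := a
    · obtain rfl : b = x i := h
      exact ⟨t i, treeVertex_root i⟩
    · obtain rfl : j = i := hx h
      exact ⟨w, treeVertex_of_ne hw⟩

theorem exists_base_iso (hT : ∀ i, (T i).IsTree) (hT' : ∀ i, (T' i).IsTree)
    (hbase : twoCore base = Set.univ) (hbase' : twoCore base' = Set.univ)
    (f : attachTrees base T t x ≃g attachTrees base' T' t' x') :
    ∃ g : base ≃g base', ∀ b, f (.inl b) = .inl (g b) := by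
  refine exists_iso_of_image_range_eq (baseEmbedding base T t x) (baseEmbedding base' T' t' x') f ?_
  have := image_twoCore f
  rwa [twoCore_eq hT, twoCore_eq hT', hbase, hbase', Set.image_univ, Set.image_univ] at this

section BaseIso

variable {f : attachTrees base T t x ≃g attachTrees base' T' t' x'} {g : base ≃g base'}

theorem symm_apply_inl (hfg : ∀ b, f (.inl b) = .inl (g b)) (b : B') :
    f.symm (.inl b) = .inl (g.symm b) := by
  rw [RelIso.symm_apply_eq, hfg, RelIso.apply_symm_apply]

theorem exists_apply_inr_eq (hfg : ∀ b, f (.inl b) = .inl (g b))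
    (w : Σ i, {w : W i // w ≠ t i}) : ∃ w', f (.inr w) = .inr w' := by
  cases h : f (.inr w) with
  | inl b =>
    rw [← RelIso.eq_symm_apply, symm_apply_inl hfg] at h
    exact absurd h Sum.inr_ne_inl
  | inr w' => exact ⟨w', rfl⟩

theorem toBase_apply_treeVertex (hT : ∀ i, (T i).IsTree) (hfg : ∀ b, f (.inl b) = .inl (g b))
    (i : ι) (w : W i) : toBase x' (f (treeVertex t x i w)) = g (x i) := by
  have hstep {w w' : W i} (hw : w ≠ t i) (hadj : (T i).Adj w w') :
      toBase x' (f (treeVertex t x i w')) = toBase x' (f (treeVertex t x i w)) := by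
    obtain ⟨v, hv⟩ := exists_apply_inr_eq hfg ⟨i, w, hw⟩
    rw [← adj_treeVertex_iff (base := base) (t := t) (x := x), ← f.map_adj_iff] at hadj
    rw [treeVertex_of_ne hw, hv] at hadj ⊢
    exact toBase_eq_of_adj_inr hadj
  have hconst : toBase x' (f (treeVertex t x i w)) = toBase x' (f (treeVertex t x i (t i))) := by
    refine apply_eq_of_reachable (G := T i) (F := fun w => toBase x' (f (treeVertex t x i w)))
      (fun a b hab => ?_) ((hT i).connected.preconnected w (t i))
    by_cases ha : a = t i
    · exact hstep (ha ▸ hab.ne') hab.symm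
    · exact (hstep ha hab).symm
  rw [hconst, treeVertex_root, hfg]
  rfl

theorem exists_apply_eq_of_nontrivial (hT : ∀ i, (T i).IsTree)
    (hfg : ∀ b, f (.inl b) = .inl (g b)) (i : ι) [Nontrivial (W i)] : ∃ j, g (x i) = x' j := by
  obtain ⟨w, hw⟩ := exists_ne (t i)
  obtain ⟨⟨j, w'⟩, hw'⟩ := exists_apply_inr_eq hfg ⟨i, w, hw⟩
  refine ⟨j, ?_⟩
  rw [← toBase_apply_treeVertex hT hfg i w, treeVertex_of_ne hw, hw']
  rfl

theorem exists_tree_iso (hT : ∀ i, (T i).IsTree) (hT' : ∀ i, (T' i).IsTree)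
    (hx : Function.Injective x) (hx' : Function.Injective x')
    (hfg : ∀ b, f (.inl b) = .inl (g b)) {i : ι} {j : ι'} (hij : g (x i) = x' j) :
    ∃ e : T i ≃g T' j, e (t i) = t' j ∧
      ∀ w, f (treeVertex t x i w) = treeVertex t' x' j (e w) := by
  have himage : f '' Set.range (treeVertex t x i) = Set.range (treeVertex t' x' j) := by
    refine Set.Subset.antisymm (Set.image_subset_iff.2 ?_) ?_
    · rintro _ ⟨w, rfl⟩
      exact (mem_range_treeVertex_iff hx').2 ((toBase_apply_treeVertex hT hfg i w).trans hij)
    · rintro _ ⟨w, rfl⟩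
      refine ⟨f.symm (treeVertex t' x' j w), (mem_range_treeVertex_iff hx).2 ?_,
        f.apply_symm_apply _⟩
      rw [toBase_apply_treeVertex hT' (symm_apply_inl hfg), RelIso.symm_apply_eq, hij]
  obtain ⟨e, he⟩ := exists_iso_of_image_range_eq (treeEmbedding base T t x i)
    (treeEmbedding base' T' t' x' j) f himage
  refine ⟨e, treeVertex_injective (t := t') (x := x') j ?_, he⟩
  calc treeVertex t' x' j (e (t i)) = f (treeVertex t x i (t i)) := (he (t i)).symm
    _ = .inl (x' j) := by rw [treeVertex_root, hfg, hij]
    _ = treeVertex t' x' j (t' j) := (treeVertex_root j).symm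

end BaseIso

section Congr

variable (g : base ≃g base') (σ : ι ≃ ι') (e : ∀ i, T i ≃g T' (σ i))
  (he : ∀ i, e i (t i) = t' (σ i)) (hx : ∀ i, g (x i) = x' (σ i))

/-- The isomorphism induced by an isomorphism of base graphs that matches the attachment vertices
and a matching family of isomorphisms of rooted trees. -/
def congr : attachTrees base T t x ≃g attachTrees base' T' t' x' where
  toEquiv := Equiv.sumCongr g.toEquiv <| Equiv.sigmaCongr σ fun i =>
    (e i).toEquiv.subtypeEquiv fun w => by
      rw [← he i]
      exact (e i).injective.ne_iff.symm
  map_rel_iff' {a b} := by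
    obtain a | ⟨i, w⟩ := a <;> obtain b | ⟨j, w'⟩ := b
    · exact g.map_adj_iff
    · change g a = x' (σ j) ∧ (T' (σ j)).Adj (t' (σ j)) (e j w') ↔ a = x j ∧ (T j).Adj (t j) w'
      rw [← hx, ← he, (e j).map_adj_iff, g.injective.eq_iff]
    · change g b = x' (σ i) ∧ (T' (σ i)).Adj (t' (σ i)) (e i w) ↔ b = x i ∧ (T i).Adj (t i) w
      rw [← hx, ← he, (e i).map_adj_iff, g.injective.eq_iff]
    · by_cases hij : i = j
      · subst hij
        exact adj_inr_inr_iff.trans ((e i).map_adj_iff.trans adj_inr_inr_iff.symm)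
      · exact iff_of_false (fun h => hij (σ.injective h.1)) fun h => hij h.1

theorem congr_inl (b : B) : congr g σ e he hx (.inl b) = .inl (g b) :=
  rfl

theorem congr_treeVertex (i : ι) (w : W i) :
    congr g σ e he hx (treeVertex t x i w) = treeVertex t' x' (σ i) (e i w) := by
  by_cases hw : w = t i
  · rw [hw, he, treeVertex_root, treeVertex_root, congr_inl, hx]
  · have hw' : e i w ≠ t' (σ i) := he i ▸ (e i).injective.ne hw
    rw [treeVertex_of_ne hw, treeVertex_of_ne hw']
    rfl

end Congr

end attachTrees

section CopiesOfTrees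

variable {B C : Type} {U : C → Type}

/-- The graph obtained from `base` by attaching, for every class `c`, one copy of the rooted tree
`(R c, t c)` at each of the vertices `x ⟨c, s⟩` with `s : I c`. -/
abbrev attachCopies (base : SimpleGraph B) (R : ∀ c, SimpleGraph (U c)) (t : ∀ c, U c)
    {I : C → Type} (x : (Σ c, I c) → B) :
    SimpleGraph (B ⊕ Σ i : Σ c, I c, {w : U i.1 // w ≠ t i.1}) :=
  attachTrees base (fun i : Σ c, I c => R i.1) (fun i => t i.1) x

/-- The coordinate-permuting action of `Q` on `∀ c, I c → M c` induced by actions of `Q` on the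
index sets `I c`. -/
def piPermHom (Q : Type) [Group Q] (I : C → Type) [∀ c, MulAction Q (I c)] (M : C → Type)
    [∀ c, Group (M c)] : Q →* MulAut (∀ c, I c → M c) :=
  autPiHom fun c => (permHom (I c) (M c)).comp (MulAction.toPermHom Q (I c))

theorem piPermHom_apply {Q : Type} [Group Q] {I : C → Type} [∀ c, MulAction Q (I c)]
    {M : C → Type} [∀ c, Group (M c)] (q : Q) (n : ∀ c, I c → M c) (c : C) (s : I c) :
    piPermHom Q I M q n c s = n c (q⁻¹ • s) :=
  rfl

namespace attachCopies

open attachTrees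

variable {base : SimpleGraph B} {R : ∀ c, SimpleGraph (U c)} {t : ∀ c, U c} {Q : Type} [Group Q]
  {I : C → Type} [∀ c, MulAction Q (I c)] {x : (Σ c, I c) → B} {ρ : Q →* (base ≃g base)}

/-- The automorphism that moves the base graph by `ρ q`, carries the copy `s` of the tree `R c` to
the copy `q • s`, and then applies `n c (q • s)` to it. -/
def twistedAut (hρ : ∀ q c s, ρ q (x ⟨c, s⟩) = x ⟨c, q • s⟩)
    (n : ∀ c, I c → autStab (R c) (t c)) (q : Q) :
    attachCopies base R t x ≃g attachCopies base R t x :=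
  attachTrees.congr (ρ q) (Equiv.sigmaCongrRight fun c => MulAction.toPerm (β := I c) q)
    (fun i => (n i.1 (q • i.2)).1) (fun i => (n i.1 (q • i.2)).2) fun i => hρ q i.1 i.2

variable (hρ : ∀ q c s, ρ q (x ⟨c, s⟩) = x ⟨c, q • s⟩)

theorem twistedAut_inl (n : ∀ c, I c → autStab (R c) (t c)) (q : Q) (b : B) :
    twistedAut hρ n q (.inl b) = .inl (ρ q b) :=
  rfl

theorem twistedAut_treeVertex (n : ∀ c, I c → autStab (R c) (t c)) {q : Q} {c : C} {s s' : I c}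
    (hs : q • s = s') (w : U c) :
    twistedAut hρ n q (treeVertex _ x ⟨c, s⟩ w) = treeVertex _ x ⟨c, s'⟩ ((n c s').1 w) := by
  subst hs
  exact congr_treeVertex ..

theorem twistedAut_mul (n n' : ∀ c, I c → autStab (R c) (t c)) (q q' : Q) :
    twistedAut hρ (n * piPermHom Q I _ q n') (q * q') =
      twistedAut hρ n q * twistedAut hρ n' q' := by
  refine iso_ext (fun b => ?_) fun ⟨c, s⟩ w => ?_
  · simp only [RelIso.mul_apply, twistedAut_inl, map_mul]
  · rw [RelIso.mul_apply, twistedAut_treeVertex hρ n' rfl, twistedAut_treeVertex hρ n rfl,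
      twistedAut_treeVertex hρ _ (mul_smul q q' s), Pi.mul_apply, Pi.mul_apply, piPermHom_apply,
      inv_smul_smul]
    rfl

/-- The homomorphism from the semidirect product to the automorphism group of the graph with
attached trees. -/
def autHom : (∀ c, I c → autStab (R c) (t c)) ⋊[piPermHom Q I fun c => autStab (R c) (t c)] Q →*
    (attachCopies base R t x ≃g attachCopies base R t x) :=
  MonoidHom.mk' (fun a => twistedAut hρ a.left a.right) fun a b =>
    twistedAut_mul hρ a.left b.left a.right b.right

theorem autHom_injective (hρinj : Function.Injective ρ) :
    Function.Injective (autHom (R := R) (t := t) hρ) := by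
  rintro ⟨n, q⟩ ⟨n', q'⟩ h
  change twistedAut hρ n q = twistedAut hρ n' q' at h
  obtain rfl : q = q' := hρinj <| RelIso.ext fun b =>
    Sum.inl_injective (congrArg (fun f => f (.inl b)) h)
  suffices n = n' by rw [this]
  funext c s
  refine Subtype.ext (RelIso.ext fun w => ?_)
  have := congrArg (fun f => f (treeVertex _ x ⟨c, q⁻¹ • s⟩ w)) h
  simp only [twistedAut_treeVertex hρ _ (smul_inv_smul q s)] at this
  exact treeVertex_injective (x := x) (⟨c, s⟩ : Σ c, I c) this

theorem autHom_surjective (hR : ∀ c, (R c).IsTree) (hx : Function.Injective x)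
    (hbase : twoCore base = Set.univ)
    (hrange : ∀ g : base ≃g base,
      (∀ c s, Nontrivial (U c) → g (x ⟨c, s⟩) ∈ Set.range x) → g ∈ ρ.range) :
    Function.Surjective (autHom (R := R) (t := t) hρ) := by
  intro f
  have htree (i : Σ c, I c) : (R i.1).IsTree := hR i.1
  obtain ⟨g, hfg⟩ := exists_base_iso htree htree hbase hbase f
  obtain ⟨q, rfl⟩ := hrange g fun c s _ =>
    (exists_apply_eq_of_nontrivial htree hfg ⟨c, s⟩).imp fun _ => Eq.symm
  have hmove (c : C) (s : I c) : ρ q (x ⟨c, q⁻¹ • s⟩) = x ⟨c, s⟩ := by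
    rw [hρ, smul_inv_smul]
  choose n hnroot hn using fun c s => exists_tree_iso htree htree hx hx hfg (hmove c s)
  refine ⟨⟨fun c s => ⟨n c s, hnroot c s⟩, q⟩, iso_ext (fun b => (hfg b).symm) fun ⟨c, s⟩ w => ?_⟩
  obtain ⟨s, rfl⟩ := MulAction.surjective q⁻¹ s
  exact (twistedAut_treeVertex hρ _ (smul_inv_smul q s) w).trans (hn c s w).symm

theorem nonempty_mulEquiv_aut (hR : ∀ c, (R c).IsTree) (hx : Function.Injective x)
    (hbase : twoCore base = Set.univ) (hρinj : Function.Injective ρ)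
    (hρ : ∀ q c s, ρ q (x ⟨c, s⟩) = x ⟨c, q • s⟩)
    (hrange : ∀ g : base ≃g base,
      (∀ c s, Nontrivial (U c) → g (x ⟨c, s⟩) ∈ Set.range x) → g ∈ ρ.range) :
    Nonempty ((attachCopies base R t x ≃g attachCopies base R t x) ≃*
      (∀ c, I c → autStab (R c) (t c)) ⋊[piPermHom Q I fun c => autStab (R c) (t c)] Q) :=
  ⟨(MulEquiv.ofBijective (autHom hρ)
    ⟨autHom_injective hρ hρinj, autHom_surjective hρ hR hx hbase hrange⟩).symm⟩

end attachCopies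

end CopiesOfTrees

/-- The homomorphism from the Klein four-group that sends its two generators to commuting
elements `s` and `t` with `s * s = 1` and `t * t = 1`. -/
def kleinHom {G : Type*} [Group G] {s t : G} (hs : s * s = 1) (ht : t * t = 1)
    (hst : Commute s t) : K4 →* G :=
  MonoidHom.mk' (fun q => s ^ q.toAdd.1.val * t ^ q.toAdd.2.val) fun q q' => by
    have hpow {z : G} (hz : z * z = 1) (c d : ZMod 2) :
        z ^ (c + d).val = z ^ c.val * z ^ d.val := by
      rw [ZMod.val_add, ← pow_add, ← pow_eq_pow_mod _ ((pow_two z).trans hz)]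
    simp only [toAdd_mul, Prod.fst_add, Prod.snd_add, hpow hs, hpow ht]
    exact (((hst.pow_pow _ _).symm.mul_mul_mul_comm _ _).symm)

namespace theta

variable {p q r : ℕ}

/-- The number of internal vertices of the three paths of a theta graph. -/
def armLength (p q r : ℕ) : Fin 3 → ℕ :=
  ![p, q, r]

/-- The internal vertices of the three paths of a theta graph. -/
def inner : (a : Fin 3) → Fin (armLength p q r a) → ThetaV p q r
  | 0 => .x1
  | 1 => .x2
  | 2 => .x3

/-- The vertices of the `a`-th path of a theta graph, numbered from `0` at `v` to
`armLength p q r a + 1` at `u`, and continued by the constant value `u`. -/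
def armVertex (a : Fin 3) : ℕ → ThetaV p q r
  | 0 => .v
  | i + 1 => if h : i < armLength p q r a then inner a ⟨i, h⟩ else .u

theorem armVertex_zero (a : Fin 3) : (armVertex a 0 : ThetaV p q r) = .v :=
  rfl

theorem armVertex_succ_of_lt {a : Fin 3} {i : ℕ} (hi : i < armLength p q r a) :
    armVertex a (i + 1) = inner a ⟨i, hi⟩ :=
  dif_pos hi

theorem armVertex_val_succ {a : Fin 3} (i : Fin (armLength p q r a)) :
    armVertex a (i + 1) = inner a i :=
  armVertex_succ_of_lt i.isLt

theorem armVertex_succ_of_le {a : Fin 3} {i : ℕ} (hi : armLength p q r a ≤ i) :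
    armVertex a (i + 1) = (.u : ThetaV p q r) :=
  dif_neg hi.not_gt

theorem inner_injective (a : Fin 3) :
    Function.Injective (inner a : Fin (armLength p q r a) → ThetaV p q r) := by
  fin_cases a <;> intro i j h <;> injection h

theorem inner_ne_u (a : Fin 3) (i : Fin (armLength p q r a)) : inner a i ≠ .u := by
  fin_cases a <;> exact nofun

theorem inner_ne_v (a : Fin 3) (i : Fin (armLength p q r a)) : inner a i ≠ .v := by
  fin_cases a <;> exact nofun

theorem eq_u_or_eq_v_or_eq_inner (b : ThetaV p q r) : b = .u ∨ b = .v ∨ ∃ a i, b = inner a i := by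
  cases b with
  | u => exact .inl rfl
  | v => exact .inr (.inl rfl)
  | x1 i => exact .inr (.inr ⟨0, i, rfl⟩)
  | x2 i => exact .inr (.inr ⟨1, i, rfl⟩)
  | x3 i => exact .inr (.inr ⟨2, i, rfl⟩)

theorem adj_v_u_iff : (theta p q r).Adj .v .u ↔ ∃ a, armLength p q r a = 0 := by
  simp [theta, armLength, Fin.exists_fin_succ]

theorem adj_inner_v_iff {a : Fin 3} {i : Fin (armLength p q r a)} :
    (theta p q r).Adj (inner a i) .v ↔ i.val = 0 := by
  fin_cases a <;> rfl

theorem adj_inner_u_iff {a : Fin 3} {i : Fin (armLength p q r a)} :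
    (theta p q r).Adj (inner a i) .u ↔ i.val + 1 = armLength p q r a := by
  have hadj : (theta p q r).Adj (inner a i) .u ↔ i.val = armLength p q r a - 1 := by
    fin_cases a <;> rfl
  rw [hadj]
  omega

theorem adj_inner_inner_iff {a : Fin 3} {i j : Fin (armLength p q r a)} :
    (theta p q r).Adj (inner a i) (inner a j) ↔ i.val + 1 = j.val ∨ j.val + 1 = i.val := by
  fin_cases a <;> rfl

theorem eq_of_adj_inner_inner {a b : Fin 3} {i : Fin (armLength p q r a)}
    {j : Fin (armLength p q r b)} (h : (theta p q r).Adj (inner a i) (inner b j)) : a = b := by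
  fin_cases a <;> fin_cases b <;> first | rfl | exact h.elim

theorem armVertex_eq_u_iff {a : Fin 3} {i : ℕ} :
    armVertex a i = (.u : ThetaV p q r) ↔ armLength p q r a < i := by
  cases i with
  | zero => simp [armVertex_zero]
  | succ i =>
    obtain hi | hi := lt_or_ge i (armLength p q r a)
    · rw [armVertex_succ_of_lt hi]
      exact iff_of_false (inner_ne_u _ _) (by omega)
    · rw [armVertex_succ_of_le hi]
      exact iff_of_true rfl (by omega)

theorem armVertex_injOn (a : Fin 3) :
    Set.InjOn (armVertex a : ℕ → ThetaV p q r) (Set.Iic (armLength p q r a + 1)) := by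
  intro i hi j hj hij
  have hu : armLength p q r a < i ↔ armLength p q r a < j := by
    rw [← armVertex_eq_u_iff, hij, armVertex_eq_u_iff]
  rw [Set.mem_Iic] at hi hj
  obtain hlt | hlt := lt_or_ge (armLength p q r a) i
  · have := hu.1 hlt
    omega
  have hlt' : j ≤ armLength p q r a := not_lt.1 fun h => hlt.not_gt (hu.2 h)
  cases i <;> cases j
  · rfl
  · rw [armVertex_succ_of_lt hlt'] at hij
    exact absurd hij.symm (inner_ne_v _ _)
  · rw [armVertex_succ_of_lt hlt] at hij
    exact absurd hij (inner_ne_v _ _)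
  · rw [armVertex_succ_of_lt hlt, armVertex_succ_of_lt hlt'] at hij
    exact congrArg (·.val + 1) (inner_injective a hij)

theorem exists_armVertex_eq (b : ThetaV p q r) : ∃ a i, armVertex a i = b := by
  obtain rfl | rfl | ⟨a, i, rfl⟩ := eq_u_or_eq_v_or_eq_inner b
  · exact ⟨0, _, armVertex_succ_of_le le_rfl⟩
  · exact ⟨0, 0, rfl⟩
  · exact ⟨a, i + 1, armVertex_succ_of_lt i.isLt⟩

theorem adj_armVertex_succ {a : Fin 3} {i : ℕ} (hi : i ≤ armLength p q r a) :
    (theta p q r).Adj (armVertex a i) (armVertex a (i + 1)) := by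
  obtain hi | hi := hi.lt_or_eq <;> cases i with
  | zero => _
  | succ i => _
  · rw [armVertex_succ_of_lt hi]
    exact (adj_inner_v_iff.2 rfl).symm
  · rw [armVertex_succ_of_lt hi, armVertex_succ_of_lt (by omega)]
    exact adj_inner_inner_iff.2 (.inl rfl)
  · rw [armVertex_succ_of_le hi.ge]
    exact adj_v_u_iff.2 ⟨a, hi.symm⟩
  · rw [armVertex_succ_of_le hi.ge, armVertex_succ_of_lt (by omega)]
    exact adj_inner_u_iff.2 hi

theorem neighborSet_armVertex {a : Fin 3} {i : ℕ} (hi : i < armLength p q r a) :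
    (theta p q r).neighborSet (armVertex a (i + 1)) = {armVertex a i, armVertex a (i + 2)} := by
  refine Set.Subset.antisymm (fun b hb => ?_) (Set.pair_subset ?_ ?_)
  · rw [mem_neighborSet, armVertex_succ_of_lt hi] at hb
    obtain rfl | rfl | ⟨a', j, rfl⟩ := eq_u_or_eq_v_or_eq_inner b
    · exact .inr (armVertex_succ_of_le (adj_inner_u_iff.1 hb).ge).symm
    · obtain rfl : i = 0 := adj_inner_v_iff.1 hb
      exact .inl rfl
    · obtain rfl := eq_of_adj_inner_inner hb
      obtain hij | hij := adj_inner_inner_iff.1 hb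
      · rw [← armVertex_val_succ, ← hij]
        exact .inr rfl
      · rw [← armVertex_val_succ, hij]
        exact .inl rfl
  · exact (adj_armVertex_succ hi.le).symm
  · exact adj_armVertex_succ hi

theorem neighborSet_v : (theta p q r).neighborSet .v = Set.range (armVertex · 1) := by
  refine Set.Subset.antisymm (fun b hb => ?_) ?_
  · obtain rfl | rfl | ⟨a, j, rfl⟩ := eq_u_or_eq_v_or_eq_inner b
    · obtain ⟨a, ha⟩ := adj_v_u_iff.1 hb
      exact ⟨a, armVertex_succ_of_le ha.le⟩
    · exact absurd ((mem_neighborSet ..).1 hb) (theta p q r).irrefl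
    · have hj : j.val = 0 := adj_inner_v_iff.1 hb.symm
      exact ⟨a, by rw [← armVertex_val_succ, hj]⟩
  · rintro _ ⟨a, rfl⟩
    exact adj_armVertex_succ (Nat.zero_le _)

theorem armVertex_one_injective (hp : 0 < p) (hq : 0 < q) :
    Function.Injective fun a => (armVertex a 1 : ThetaV p q r) := by
  have h0 : (armVertex 0 1 : ThetaV p q r) = .x1 ⟨0, hp⟩ := armVertex_succ_of_lt hp
  have h1 : (armVertex 1 1 : ThetaV p q r) = .x2 ⟨0, hq⟩ := armVertex_succ_of_lt hq
  have h2 : (armVertex 2 1 : ThetaV p q r) = .u ∨ ∃ i, (armVertex 2 1 : ThetaV p q r) = .x3 i := by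
    obtain hr | hr := Nat.eq_zero_or_pos r
    · exact .inl (armVertex_succ_of_le hr.le)
    · exact .inr ⟨⟨0, hr⟩, armVertex_succ_of_lt hr⟩
  intro a b hab
  fin_cases a <;> fin_cases b <;> grind

/-- The automorphism of `theta p p r` that exchanges the first two paths and fixes the third
pointwise. -/
def swap (p r : ℕ) : theta p p r ≃g theta p p r where
  toFun
    | .u => .u | .v => .v | .x1 i => .x2 i | .x2 i => .x1 i | .x3 i => .x3 i
  invFun
    | .u => .u | .v => .v | .x1 i => .x2 i | .x2 i => .x1 i | .x3 i => .x3 i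
  left_inv b := by cases b <;> rfl
  right_inv b := by cases b <;> rfl
  map_rel_iff' {b c} := by cases b <;> cases c <;> simp [theta]

/-- The automorphism of `theta p q r` that exchanges `u` and `v` and reverses each path. -/
def rev (p q r : ℕ) : theta p q r ≃g theta p q r where
  toFun
    | .u => .v | .v => .u | .x1 i => .x1 i.rev | .x2 i => .x2 i.rev | .x3 i => .x3 i.rev
  invFun
    | .u => .v | .v => .u | .x1 i => .x1 i.rev | .x2 i => .x2 i.rev | .x3 i => .x3 i.rev
  left_inv b := by cases b <;> simp only [Fin.rev_rev]
  right_inv b := by cases b <;> simp only [Fin.rev_rev]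
  map_rel_iff' {b c} := by
    cases b <;> cases c <;> simp only [theta, Fin.val_rev, Equiv.coe_fn_mk] <;> omega

theorem swap_armVertex {p r : ℕ} (a : Fin 3) (i : ℕ) :
    swap p r (armVertex a i) = armVertex (Equiv.swap 0 1 a) i := by
  cases i with
  | zero => rfl
  | succ i =>
    fin_cases a <;> simp only [armVertex] <;> split_ifs <;> first | rfl | contradiction

theorem iso_ext {V : Type*} {G : SimpleGraph V} {f g : theta p q r ≃g G}
    (h : ∀ a i, f (armVertex a i) = g (armVertex a i)) : f = g := by
  ext b
  obtain ⟨a, i, rfl⟩ := exists_armVertex_eq b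
  exact h a i

theorem swap_mul_swap (p r : ℕ) : swap p r * swap p r = 1 :=
  RelIso.ext (swap p r).left_inv

theorem rev_mul_rev (p q r : ℕ) : rev p q r * rev p q r = 1 :=
  RelIso.ext (rev p q r).left_inv

theorem commute_swap_rev (p r : ℕ) : Commute (swap p r) (rev p p r) :=
  RelIso.ext fun b => by cases b <;> rfl

theorem ncard_neighborSet_v (hp : 0 < p) (hq : 0 < q) :
    ((theta p q r).neighborSet .v).ncard = 3 := by
  rw [neighborSet_v, Set.ncard_range_of_injective (armVertex_one_injective hp hq), Nat.card_fin]

theorem ncard_neighborSet_u (hp : 0 < p) (hq : 0 < q) :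
    ((theta p q r).neighborSet .u).ncard = 3 := by
  rw [← ncard_neighborSet_v (r := r) hp hq, ← Set.ncard_image_of_injective _ (rev p q r).injective,
    Iso.image_neighborSet]
  rfl

theorem ncard_neighborSet_inner (a : Fin 3) (i : Fin (armLength p q r a)) :
    ((theta p q r).neighborSet (inner a i)).ncard = 2 := by
  rw [← armVertex_val_succ, neighborSet_armVertex i.isLt, Set.ncard_pair]
  intro h
  have := armVertex_injOn a (Set.mem_Iic.2 (by omega)) (Set.mem_Iic.2 (by omega)) h
  omega

instance : Finite (ThetaV p q r) := by
  refine Finite.of_surjective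
    (fun b : Option (Option (Σ a, Fin (armLength p q r a))) =>
      b.elim .u fun b => b.elim .v fun i => inner i.1 i.2) fun b => ?_
  obtain rfl | rfl | ⟨a, i, rfl⟩ := eq_u_or_eq_v_or_eq_inner b
  exacts [⟨none, rfl⟩, ⟨some none, rfl⟩, ⟨some (some ⟨a, i⟩), rfl⟩]

theorem twoCore_theta (hp : 0 < p) (hq : 0 < q) : twoCore (theta p q r) = Set.univ := by
  refine twoCore_eq_univ fun b => Set.one_lt_ncard_iff_nontrivial.1 ?_
  obtain rfl | rfl | ⟨a, i, rfl⟩ := eq_u_or_eq_v_or_eq_inner b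
  · simp [ncard_neighborSet_u hp hq]
  · simp [ncard_neighborSet_v hp hq]
  · simp [ncard_neighborSet_inner]

theorem eq_u_or_eq_v_of_ncard_neighborSet {b : ThetaV p q r}
    (hb : ((theta p q r).neighborSet b).ncard = 3) : b = .u ∨ b = .v := by
  obtain rfl | rfl | ⟨a, i, rfl⟩ := eq_u_or_eq_v_or_eq_inner b
  · exact .inl rfl
  · exact .inr rfl
  · simp [ncard_neighborSet_inner] at hb

section Automorphisms

variable {g : theta p q r ≃g theta p q r}

theorem ncard_neighborSet_apply (b : ThetaV p q r) :
    ((theta p q r).neighborSet (g b)).ncard = ((theta p q r).neighborSet b).ncard := by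
  rw [← Iso.image_neighborSet, Set.ncard_image_of_injective _ g.injective]

theorem apply_v_eq_u_or_eq_v (hp : 0 < p) (hq : 0 < q) : g .v = .u ∨ g .v = .v :=
  eq_u_or_eq_v_of_ncard_neighborSet <|
    (ncard_neighborSet_apply _).trans (ncard_neighborSet_v hp hq)

theorem apply_u_of_apply_v (hp : 0 < p) (hq : 0 < q) (hv : g .v = .v) : g .u = .u :=
  (eq_u_or_eq_v_of_ncard_neighborSet <|
    (ncard_neighborSet_apply _).trans (ncard_neighborSet_u hp hq)).resolve_right fun h =>
      nomatch g.injective (h.trans hv.symm)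

theorem apply_armVertex (hv : g .v = .v) (hu : g .u = .u) {a b : Fin 3}
    (hab : g (armVertex a 1) = armVertex b 1) (i : ℕ) : g (armVertex a i) = armVertex b i := by
  suffices g (armVertex a i) = armVertex b i ∧ g (armVertex a (i + 1)) = armVertex b (i + 1) from
    this.1
  induction i with
  | zero => exact ⟨hv, hab⟩
  | succ i ih =>
    refine ⟨ih.2, ?_⟩
    have hend : armLength p q r a ≤ i ↔ armLength p q r b ≤ i := by
      rw [← Nat.lt_succ_iff, ← Nat.lt_succ_iff, ← armVertex_eq_u_iff, ← armVertex_eq_u_iff, ← ih.2]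
      exact ⟨fun h => by rw [h, hu], fun h => g.injective (h.trans hu.symm)⟩
    obtain hi | hi := le_or_gt (armLength p q r a) i
    · rw [armVertex_succ_of_le (by omega), armVertex_succ_of_le (by omega), hu]
    · have hnext : g (armVertex a (i + 2)) ∈ ({armVertex b i, armVertex b (i + 2)} : Set _) := by
        rw [← neighborSet_armVertex (by omega), ← ih.2, ← Iso.image_neighborSet,
          neighborSet_armVertex hi]
        exact Set.mem_image_of_mem g (.inr rfl)
      refine hnext.resolve_left fun hback => ?_
      have := armVertex_injOn a (Set.mem_Iic.2 (by omega)) (Set.mem_Iic.2 (by omega))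
        (g.injective (hback.trans ih.1.symm))
      omega

theorem exists_armVertex_perm (hp : 0 < p) (hq : 0 < q) (hv : g .v = .v) :
    ∃ σ : Fin 3 → Fin 3, Function.Injective σ ∧
      ∀ a i, g (armVertex a i) = armVertex (σ a) i := by
  have hmem (a : Fin 3) : ∃ b, armVertex b 1 = g (armVertex a 1) := by
    have : g (armVertex a 1) ∈ (theta p q r).neighborSet (g .v) :=
      g.map_adj_iff.2 (adj_armVertex_succ (Nat.zero_le _))
    rwa [hv, neighborSet_v] at this
  choose σ hσ using hmem
  refine ⟨σ, fun a b hab => armVertex_one_injective hp hq (g.injective ?_), fun a =>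
    apply_armVertex hv (apply_u_of_apply_v hp hq hv) (hσ a).symm⟩
  change g (armVertex a 1) = g (armVertex b 1)
  rw [← hσ, ← hσ, hab]

theorem armLength_eq_of_apply_armVertex (hu : g .u = .u) {a b : Fin 3}
    (h : ∀ i, g (armVertex a i) = armVertex b i) : armLength p q r a = armLength p q r b := by
  have hlt (i : ℕ) : armLength p q r a < i ↔ armLength p q r b < i := by
    rw [← armVertex_eq_u_iff, ← armVertex_eq_u_iff, ← h]
    exact ⟨fun h => by rw [h, hu], fun h => g.injective (h.trans hu.symm)⟩
  exact le_antisymm (Nat.lt_succ_iff.1 ((hlt _).2 (Nat.lt_succ_self _)))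
    (Nat.lt_succ_iff.1 ((hlt _).1 (Nat.lt_succ_self _)))

theorem exists_apply_inner_eq {a b : Fin 3} (hab : armLength p q r a = armLength p q r b)
    (h : ∀ i, g (armVertex a i) = armVertex b i) (i : Fin (armLength p q r a)) :
    ∃ j, g (inner a i) = inner b j :=
  ⟨i.cast hab, by rw [← armVertex_val_succ, h, ← armVertex_val_succ, Fin.val_cast]⟩

end Automorphisms

theorem eq_one_or_eq_swap {p r : ℕ} (hp : 0 < p) {g : theta p p r ≃g theta p p r} (hv : g .v = .v)
    (hg : r = p → ∃ i, ∀ y, g (.x1 i) ≠ .x3 y ∧ g (.x2 i) ≠ .x3 y) :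
    g = 1 ∨ g = swap p r := by
  obtain ⟨σ, hσinj, hσ⟩ := exists_armVertex_perm hp hp hv
  have hlen (a : Fin 3) : armLength p p r a = armLength p p r (σ a) :=
    armLength_eq_of_apply_armVertex (apply_u_of_apply_v hp hp hv) (hσ a)
  have hthird {a : Fin 3} (ha : σ a = 2) (i : Fin (armLength p p r a)) :
      ∃ y, g (inner a i) = .x3 y :=
    exists_apply_inner_eq (b := 2) (hlen a |>.trans (congrArg _ ha)) (ha ▸ hσ a) i
  have h0 : σ 0 ≠ 2 := by
    intro h
    obtain ⟨i, hi⟩ := hg (by simpa [h, armLength] using (hlen 0).symm)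
    obtain ⟨y, hy⟩ := hthird h i
    exact (hi y).1 hy
  have h1 : σ 1 ≠ 2 := by
    intro h
    obtain ⟨i, hi⟩ := hg (by simpa [h, armLength] using (hlen 1).symm)
    obtain ⟨y, hy⟩ := hthird h i
    exact (hi y).2 hy
  have hcases : σ = id ∨ σ = Equiv.swap 0 1 := by
    clear hthird hlen hσ
    decide +revert
  obtain rfl | rfl := hcases
  · exact .inl (iso_ext hσ)
  · exact .inr (iso_ext fun a i => (hσ a i).trans (swap_armVertex a i).symm)

/-- The action of the Klein four-group on `theta p p r` in which `(1, 0)` exchanges the first two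
paths and `(0, 1)` exchanges the ends. -/
def kleinAction (p r : ℕ) : K4 →* (theta p p r ≃g theta p p r) :=
  kleinHom (swap_mul_swap p r) (rev_mul_rev p p r) (commute_swap_rev p r)

theorem kleinAction_injective {p : ℕ} (hp : 0 < p) (r : ℕ) :
    Function.Injective (kleinAction p r) := by
  refine (injective_iff_map_eq_one _).2 fun ⟨a, b⟩ h => ?_
  have hv := congrArg (fun g => g .v) h
  have hx := congrArg (fun g => g (.x1 ⟨0, hp⟩)) h
  have huv : (.u : ThetaV p p r) ≠ .v := nofun
  have hx12 : (.x2 ⟨0, hp⟩ : ThetaV p p r) ≠ .x1 ⟨0, hp⟩ := nofun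
  fin_cases a <;> fin_cases b
  exacts [rfl, absurd hv huv, absurd hx hx12, absurd hv huv]

theorem mem_range_kleinAction {p r : ℕ} (hp : 0 < p) {g : theta p p r ≃g theta p p r}
    (hg : r = p → ∃ i, ∀ y, g (.x1 i) ≠ .x3 y ∧ g (.x2 i) ≠ .x3 y) :
    g ∈ (kleinAction p r).range := by
  have hswap : swap p r ∈ (kleinAction p r).range := ⟨.ofAdd (1, 0), rfl⟩
  have hrev : rev p p r ∈ (kleinAction p r).range := ⟨.ofAdd (0, 1), rfl⟩
  have hfix {f : theta p p r ≃g theta p p r} (hv : f .v = .v)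
      (hf : r = p → ∃ i, ∀ y, f (.x1 i) ≠ .x3 y ∧ f (.x2 i) ≠ .x3 y) :
      f ∈ (kleinAction p r).range := by
    obtain rfl | rfl := eq_one_or_eq_swap hp hv hf
    exacts [one_mem _, hswap]
  obtain hv | hv := apply_v_eq_u_or_eq_v (g := g) hp hp
  · have hx3 {b : ThetaV p p r} {y : Fin r} (h : rev p p r (g b) = .x3 y) : g b = .x3 y.rev :=
      (rev p p r).injective (by rw [h]; exact congrArg _ y.rev_rev.symm)
    refine (Subgroup.mul_mem_cancel_left _ hrev).1 (hfix (f := rev p p r * g) ?_ fun hr => ?_)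
    · rw [RelIso.mul_apply, hv]
      rfl
    · exact (hg hr).imp fun i hi y => ⟨fun h => (hi _).1 (hx3 h), fun h => (hi _).2 (hx3 h)⟩
  · exact hfix hv hg

theorem kleinAction_apply_of_mul_eq {p r : ℕ} {b : ThetaV p p r} {q s s' t : K4}
    (h : q * s = s' * t) (ht : kleinAction p r t b = b) :
    kleinAction p r q (kleinAction p r s b) = kleinAction p r s' b := by
  rw [← RelIso.mul_apply, ← map_mul, h, map_mul, RelIso.mul_apply, ht]

theorem kleinAction_apply_u {p r : ℕ} (a : ZMod 2) :
    kleinAction p r (.ofAdd (a, 0)) .u = .u := by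
  fin_cases a <;> rfl

theorem kleinAction_apply_midpoint {k r : ℕ} (b : ZMod 2) :
    kleinAction (2 * k + 1) r (.ofAdd (0, b)) (.x1 ⟨k, by omega⟩) = .x1 ⟨k, by omega⟩ := by
  fin_cases b
  · rfl
  · exact congrArg ThetaV.x1 (Fin.ext (by simp only [Fin.val_rev]; omega))

end theta

/-- The isomorphism classes of the attached trees: `inl j` stands for `T_j¹, …, T_j⁴`, the first
`Unit` for `Θ₁, Θ₂` and the second one for `Υ₁, Υ₂`. -/
abbrev TreeClass (k : ℕ) : Type := Fin k ⊕ Unit ⊕ Unit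

namespace TreeClass

variable {k : ℕ} {WT : Fin 4 → Fin k → Type} {WΘ WΥ : Fin 2 → Type}

/-- The index set of the attached trees in a class, in the coordinates of `stmt3act`. -/
def Copy : TreeClass k → Type
  | .inl _ => ZMod 2 × ZMod 2
  | .inr (.inl _) => ZMod 2
  | .inr (.inr _) => ZMod 2

instance : ∀ c : TreeClass k, MulAction K4 c.Copy
  | .inl _ => inferInstanceAs (MulAction (Multiplicative (ZMod 2 × ZMod 2)) (ZMod 2 × ZMod 2))
  | .inr (.inl _) => MulAction.compHom (ZMod 2) fstK
  | .inr (.inr _) => MulAction.compHom (ZMod 2) sndK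

/-- The vertex type of the representative of a class. -/
def Vertex (WT : Fin 4 → Fin k → Type) (WΘ WΥ : Fin 2 → Type) : TreeClass k → Type
  | .inl j => WT 0 j
  | .inr (.inl _) => WΘ 0
  | .inr (.inr _) => WΥ 0

/-- The tree chosen as the representative of a class. -/
def tree (TT : ∀ a j, SimpleGraph (WT a j)) (TΘ : ∀ j, SimpleGraph (WΘ j))
    (TΥ : ∀ j, SimpleGraph (WΥ j)) : ∀ c : TreeClass k, SimpleGraph (c.Vertex WT WΘ WΥ)
  | .inl j => TT 0 j
  | .inr (.inl _) => TΘ 0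
  | .inr (.inr _) => TΥ 0

/-- The root of the representative of a class. -/
def root (tT : ∀ a j, WT a j) (tΘ : ∀ j, WΘ j) (tΥ : ∀ j, WΥ j) :
    ∀ c : TreeClass k, c.Vertex WT WΘ WΥ
  | .inl j => tT 0 j
  | .inr (.inl _) => tΘ 0
  | .inr (.inr _) => tΥ 0

theorem isTree_tree {TT : ∀ a j, SimpleGraph (WT a j)} {TΘ : ∀ j, SimpleGraph (WΘ j)}
    {TΥ : ∀ j, SimpleGraph (WΥ j)} (hT : ∀ j, (TT 0 j).IsTree) (hΘ : (TΘ 0).IsTree)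
    (hΥ : (TΥ 0).IsTree) : ∀ c, (tree TT TΘ TΥ c).IsTree
  | .inl j => hT j
  | .inr (.inl _) => hΘ
  | .inr (.inr _) => hΥ

/-- The four trees `T_j¹, T_j², T_j³, T_j⁴` in the coordinates of `stmt3act`. -/
def finFourEquiv : Fin 4 ≃ ZMod 2 × ZMod 2 where
  toFun := ![(0, 0), (0, 1), (1, 0), (1, 1)]
  invFun s := if s = (0, 0) then 0 else if s = (0, 1) then 1 else if s = (1, 0) then 2 else 3
  left_inv := by decide
  right_inv := by decide

/-- The indexing of the attached trees by their class and their place in that class. -/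
def indexEquiv (k : ℕ) : Stmt3Index k ≃ Σ c : TreeClass k, c.Copy where
  toFun
    | .inl (a, j) => ⟨.inl j, finFourEquiv a⟩
    | .inr (.inl a) => ⟨.inr (.inl ()), a⟩
    | .inr (.inr a) => ⟨.inr (.inr ()), a⟩
  invFun
    | ⟨.inl j, s⟩ => .inl (finFourEquiv.symm s, j)
    | ⟨.inr (.inl _), s⟩ => .inr (.inl s)
    | ⟨.inr (.inr _), s⟩ => .inr (.inr s)
  left_inv := by
    rintro (⟨a, j⟩ | a | a)
    · exact congrArg (fun a => Sum.inl (a, j)) (finFourEquiv.symm_apply_apply a)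
    · rfl
    · rfl
  right_inv := by
    rintro ⟨j | _ | _, s⟩
    · exact congrArg (Sigma.mk (Sum.inl j)) (finFourEquiv.apply_symm_apply s)
    · rfl
    · rfl

theorem exists_iso_tree {TT : ∀ a j, SimpleGraph (WT a j)} {TΘ : ∀ j, SimpleGraph (WΘ j)}
    {TΥ : ∀ j, SimpleGraph (WΥ j)} {tT : ∀ a j, WT a j} {tΘ : ∀ j, WΘ j} {tΥ : ∀ j, WΥ j}
    (hT : ∀ a j, ∃ e : TT a j ≃g TT 0 j, e (tT a j) = tT 0 j)
    (hΘ : ∀ j, ∃ e : TΘ j ≃g TΘ 0, e (tΘ j) = tΘ 0)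
    (hΥ : ∀ j, ∃ e : TΥ j ≃g TΥ 0, e (tΥ j) = tΥ 0) :
    ∀ i : Stmt3Index k, ∃ e : stmt3T TT TΘ TΥ i ≃g tree TT TΘ TΥ (indexEquiv k i).1,
      e (stmt3root tT tΘ tΥ i) = root tT tΘ tΥ (indexEquiv k i).1
  | .inl (a, j) => hT a j
  | .inr (.inl j) => hΘ j
  | .inr (.inr j) => hΥ j

/-- The group `∀ c, c.Copy → M c`, written as the product that occurs in `stmt3group`. -/
def piCopyEquiv (M : TreeClass k → Type) [∀ c, Group (M c)] :
    (∀ c : TreeClass k, c.Copy → M c) ≃*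
      (∀ j, ZMod 2 × ZMod 2 → M (.inl j)) × (ZMod 2 → M (.inr (.inl ()))) ×
        (ZMod 2 → M (.inr (.inr ()))) where
  toFun n := (fun j => n (.inl j), n (.inr (.inl ())), n (.inr (.inr ())))
  invFun n
    | .inl j => n.1 j
    | .inr (.inl _) => n.2.1
    | .inr (.inr _) => n.2.2
  left_inv n := by
    funext c
    rcases c with j | _ | _ <;> rfl
  right_inv _ := rfl
  map_mul' _ _ := rfl

/-- The semidirect product of the `M c`-valued families by the Klein four-group, written as
`stmt3group`. -/
def semidirectProductEquiv (M : TreeClass k → Type) [∀ c, Group (M c)] :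
    (∀ c : TreeClass k, c.Copy → M c) ⋊[piPermHom K4 Copy M] K4 ≃*
      stmt3group (fun j => M (.inl j)) (M (.inr (.inl ()))) (M (.inr (.inr ()))) :=
  SemidirectProduct.congr (piCopyEquiv M) (MulEquiv.refl K4) fun _ => MulEquiv.ext fun _ => rfl

end TreeClass

section AttachPoint

open theta TreeClass

variable {k m : ℕ}

/-- The vertices at which the trees are attached, as the orbits of the vertices `a_j`, `r₁` and `u`
under the Klein four-group. -/
def attachPoint (k m : ℕ) : (Σ c : TreeClass k, c.Copy) → ThetaV (2 * k + 1) (2 * k + 1) m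
  | ⟨.inl j, s⟩ => kleinAction (2 * k + 1) m (.ofAdd s) (.x1 ⟨j, by omega⟩)
  | ⟨.inr (.inl _), a⟩ =>
      kleinAction (2 * k + 1) m (.ofAdd ((a, 0) : ZMod 2 × ZMod 2)) (.x1 ⟨k, by omega⟩)
  | ⟨.inr (.inr _), b⟩ => kleinAction (2 * k + 1) m (.ofAdd ((0, b) : ZMod 2 × ZMod 2)) .u

theorem kleinAction_attachPoint (q : K4) (c : TreeClass k) (s : c.Copy) :
    kleinAction (2 * k + 1) m q (attachPoint k m ⟨c, s⟩) = attachPoint k m ⟨c, q • s⟩ := by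
  obtain ⟨a, b⟩ := q
  obtain j | _ | _ := c
  · exact kleinAction_apply_of_mul_eq (mul_one _).symm rfl
  · change ZMod 2 at s
    have hcomm : (.ofAdd (a, b) * .ofAdd (s, 0) : K4) = .ofAdd (a + s, 0) * .ofAdd (0, b) := by
      simp only [← ofAdd_add, Prod.mk_add_mk, add_zero, zero_add]
    exact kleinAction_apply_of_mul_eq hcomm (kleinAction_apply_midpoint b)
  · change ZMod 2 at s
    have hcomm : (.ofAdd (a, b) * .ofAdd (0, s) : K4) = .ofAdd (0, b + s) * .ofAdd (a, 0) := by
      simp only [← ofAdd_add, Prod.mk_add_mk, add_zero, zero_add]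
    exact kleinAction_apply_of_mul_eq hcomm (kleinAction_apply_u a)

theorem attachPoint_indexEquiv (i : Stmt3Index k) :
    attachPoint k m (indexEquiv k i) = stmt3x k m i := by
  have hrev (j : Fin k) :
      Fin.rev (⟨j, by omega⟩ : Fin (2 * k + 1)) = ⟨2 * k - j, by omega⟩ :=
    Fin.ext (by simp only [Fin.val_rev]; omega)
  obtain ⟨a, j⟩ | a | a := i <;> fin_cases a
  exacts [rfl, congrArg ThetaV.x1 (hrev j), rfl, congrArg ThetaV.x2 (hrev j), rfl, rfl, rfl, rfl]

theorem stmt3x_injective (k m : ℕ) : Function.Injective (stmt3x k m) := by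
  rintro (⟨a, j⟩ | a | a) (⟨a', j'⟩ | a' | a') h <;> fin_cases a <;> fin_cases a' <;>
    simp [stmt3x] at h ⊢ <;> omega

theorem attachPoint_injective (k m : ℕ) : Function.Injective (attachPoint k m) :=
  ((indexEquiv k).injective_comp _).1 <| by
    simpa only [Function.comp_def, attachPoint_indexEquiv] using stmt3x_injective k m

theorem attachPoint_ne_x3 (i : Σ c : TreeClass k, c.Copy) (y : Fin m) :
    attachPoint k m i ≠ .x3 y := by
  obtain ⟨i, rfl⟩ := (indexEquiv k).surjective i
  rw [attachPoint_indexEquiv]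
  obtain ⟨a, j⟩ | a | a := i <;> fin_cases a <;> exact nofun

theorem mem_range_kleinAction_of_apply_attachPoint_mem {WT : Fin 4 → Fin k → Type}
    {WΘ WΥ : Fin 2 → Type}
    (hside : m ≠ 2 * k + 1 ∨ (∃ j, Nontrivial (WT 0 j)) ∨ Nontrivial (WΘ 0))
    (g : theta (2 * k + 1) (2 * k + 1) m ≃g theta (2 * k + 1) (2 * k + 1) m)
    (hg : ∀ c s, Nontrivial (c.Vertex WT WΘ WΥ) →
      g (attachPoint k m ⟨c, s⟩) ∈ Set.range (attachPoint k m)) :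
    g ∈ (kleinAction (2 * k + 1) m).range := by
  have hne {c : TreeClass k} (hc : Nontrivial (c.Vertex WT WΘ WΥ)) (s : c.Copy) (y : Fin m) :
      g (attachPoint k m ⟨c, s⟩) ≠ .x3 y := by
    obtain ⟨i, hi⟩ := hg c s hc
    exact hi ▸ attachPoint_ne_x3 i y
  refine mem_range_kleinAction (Nat.succ_pos _) fun hm => ?_
  obtain h | ⟨j, hj⟩ | hΘ := hside
  · exact absurd hm h
  · exact ⟨⟨j, by omega⟩, fun y => ⟨hne (c := .inl j) hj ((0, 0) : ZMod 2 × ZMod 2) y,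
      hne (c := .inl j) hj ((1, 0) : ZMod 2 × ZMod 2) y⟩⟩
  · exact ⟨⟨k, by omega⟩, fun y => ⟨hne (c := .inr (.inl ())) hΘ (0 : ZMod 2) y,
      hne (c := .inr (.inl ())) hΘ (1 : ZMod 2) y⟩⟩

end AttachPoint

theorem exists_iso_zero_of_exists_iso {W : Fin 2 → Type*} {T : ∀ a, SimpleGraph (W a)}
    {t : ∀ a, W a} (h : ∃ e : T 0 ≃g T 1, e (t 0) = t 1) (a : Fin 2) :
    ∃ e : T a ≃g T 0, e (t a) = t 0 := by
  obtain ⟨e, he⟩ := h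
  fin_cases a
  · exact ⟨RelIso.refl _, rfl⟩
  · exact ⟨e.symm, e.symm_apply_eq.2 he.symm⟩

theorem aut_bicyclic_first_type_general_general (k m : ℕ)
    {WT : Fin 4 → Fin k → Type} {WΘ WΥ : Fin 2 → Type}
    (TT : ∀ a j, SimpleGraph (WT a j)) (TΘ : ∀ j, SimpleGraph (WΘ j))
    (TΥ : ∀ j, SimpleGraph (WΥ j))
    (tT : ∀ a j, WT a j) (tΘ : ∀ j, WΘ j) (tΥ : ∀ j, WΥ j)
    (hTtree : ∀ j, (TT 0 j).IsTree) (hΘtree : (TΘ 0).IsTree) (hΥtree : (TΥ 0).IsTree)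
    (hTiso : ∀ a j, ∃ e : TT a j ≃g TT 0 j, e (tT a j) = tT 0 j)
    (hΘiso : ∀ a, ∃ e : TΘ a ≃g TΘ 0, e (tΘ a) = tΘ 0)
    (hΥiso : ∀ a, ∃ e : TΥ a ≃g TΥ 0, e (tΥ a) = tΥ 0)
    (hside : m ≠ 2 * k + 1 ∨ (∃ j, Nontrivial (WT 0 j)) ∨ Nontrivial (WΘ 0)) :
    Nonempty ((stmt3Graph k m TT TΘ TΥ tT tΘ tΥ ≃g stmt3Graph k m TT TΘ TΥ tT tΘ tΥ) ≃*
      stmt3group (fun j => ↥(autStab (TT 0 j) (tT 0 j)))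
        ↥(autStab (TΘ 0) (tΘ 0)) ↥(autStab (TΥ 0) (tΥ 0))) := by
  have hp : 0 < 2 * k + 1 := Nat.succ_pos _
  choose e he using TreeClass.exists_iso_tree hTiso hΘiso hΥiso
  let copies := attachCopies (theta (2 * k + 1) (2 * k + 1) m) (TreeClass.tree TT TΘ TΥ)
    (TreeClass.root tT tΘ tΥ) (attachPoint k m)
  let E : stmt3Graph k m TT TΘ TΥ tT tΘ tΥ ≃g copies :=
    attachTrees.congr (RelIso.refl _) (TreeClass.indexEquiv k) e he fun i =>
      (attachPoint_indexEquiv i).symm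
  obtain ⟨Ψ⟩ : Nonempty ((copies ≃g copies) ≃* _) :=
    attachCopies.nonempty_mulEquiv_aut (TreeClass.isTree_tree hTtree hΘtree hΥtree)
      (attachPoint_injective k m) (theta.twoCore_theta hp hp) (theta.kleinAction_injective hp m)
      kleinAction_attachPoint (mem_range_kleinAction_of_apply_attachPoint_mem (WΥ := WΥ) hside)
  exact ⟨((autConj E).trans Ψ).trans (TreeClass.semidirectProductEquiv _)⟩

/-- Corollary 2.3. -/
theorem aut_bicyclic_first_type_general
    (k : ℕ) (hk : 0 < k) (m : ℕ)
    {WT : Fin 4 → Fin k → Type} {WΘ WΥ : Fin 2 → Type}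
    [∀ a j, Fintype (WT a j)] [∀ j, Fintype (WΘ j)] [∀ j, Fintype (WΥ j)]
    (TT : ∀ a j, SimpleGraph (WT a j)) (TΘ : ∀ j, SimpleGraph (WΘ j))
    (TΥ : ∀ j, SimpleGraph (WΥ j))
    (tT : ∀ a j, WT a j) (tΘ : ∀ j, WΘ j) (tΥ : ∀ j, WΥ j)
    (hTtree : ∀ a j, (TT a j).IsTree) (hΘtree : ∀ j, (TΘ j).IsTree)
    (hΥtree : ∀ j, (TΥ j).IsTree)
    (hTiso : ∀ a a' j, ∃ e : TT a j ≃g TT a' j, e (tT a j) = tT a' j)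
    (hΘiso : ∃ e : TΘ 0 ≃g TΘ 1, e (tΘ 0) = tΘ 1)
    (hΥiso : ∃ e : TΥ 0 ≃g TΥ 1, e (tΥ 0) = tΥ 1)
    (hside : m + 1 ≠ 2 * k + 2 ∨ Nontrivial (WT 0 ⟨0, hk⟩) ∨ Nontrivial (WΘ 0)) :
    Nonempty ((stmt3Graph k m TT TΘ TΥ tT tΘ tΥ ≃g stmt3Graph k m TT TΘ TΥ tT tΘ tΥ) ≃*
      stmt3group (fun j => ↥(autStab (TT 0 j) (tT 0 j)))
        ↥(autStab (TΘ 0) (tΘ 0)) ↥(autStab (TΥ 0) (tΥ 0))) := by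
  exact aut_bicyclic_first_type_general_general k m TT TΘ TΥ tT tΘ tΥ (hTtree 0) (hΘtree 0)
    (hΥtree 0) (fun a => hTiso a 0) (exists_iso_zero_of_exists_iso hΘiso)
    (exists_iso_zero_of_exists_iso hΥiso) (hside.imp (by omega) (.imp_left fun h => ⟨_, h⟩))
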